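/- For any orthogonal matrix P ∈ O(n), the set Q_P = {A ∈ S_n : PA + AP = 0} is a linear subspace of the space of n×n real symmetric matrices consisting entirely of austere matrices. -/

import Mathlib

open Matrix

/-!
Conjugation by an invertible `P` preserves traces. If `P` anticommutes with `A`, it conjugates `A`
to `-A`, hence `A ^ m` to `-A ^ m` for odd `m`; so `A ^ m` and its negative have the same trace.
-/

theorem mul_add_mul_eq_zero_iff_semiconjBy_neg {S : Type*} [NonUnitalRing S] {p a : S} :
    p * a + a * p = 0 ↔ SemiconjBy p a (-a) := by
  rw [SemiconjBy, neg_mul, eq_neg_iff_add_eq_zero]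

section Trace

variable {ι R : Type*} [Fintype ι] [DecidableEq ι]

theorem trace_eq_of_semiconjBy [CommSemiring R] {P A B : Matrix ι ι R} (hP : IsUnit P)
    (h : SemiconjBy P A B) : A.trace = B.trace := by
  obtain ⟨u, rfl⟩ := hP
  rw [(Units.eq_mul_inv_iff_mul_eq u).mpr h.eq.symm, trace_units_conj]

theorem trace_pow_eq_zero_of_semiconjBy_neg [CommRing R] {P A : Matrix ι ι R}
    (hR : (2 : R) ∈ nonZeroDivisors R) (hP : IsUnit P) (h : SemiconjBy P A (-A))
    {m : ℕ} (hm : Odd m) : (A ^ m).trace = 0 := by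
  have trace_eq_neg : (A ^ m).trace = -(A ^ m).trace := by
    simpa only [hm.neg_pow, trace_neg] using trace_eq_of_semiconjBy hP (h.pow_right m)
  have two_mul_trace : 2 * (A ^ m).trace = 0 := by
    rwa [two_mul, ← eq_neg_iff_add_eq_zero]
  exact (mul_left_mem_nonZeroDivisors_eq_zero_iff hR).mp two_mul_trace

end Trace

section SymmetricAnticommutant

variable {ι R : Type*} [Fintype ι] [CommSemiring R]

/-- The space `Q_P` of symmetric matrices that anticommute with `P`, encoded as the intersection of
the fixed points of transposition with the kernel of `A ↦ P * A + A * P`. -/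
def symmetricAnticommutant (P : Matrix ι ι R) : Submodule R (Matrix ι ι R) :=
  LinearMap.eqLocus (transposeLinearEquiv ι ι R R).toLinearMap LinearMap.id ⊓
    LinearMap.ker (LinearMap.mulLeft R P + LinearMap.mulRight R P)

theorem mem_symmetricAnticommutant {P A : Matrix ι ι R} :
    A ∈ symmetricAnticommutant P ↔ A.IsSymm ∧ P * A + A * P = 0 :=
  Iff.rfl

end SymmetricAnticommutant

theorem anticommutant_is_austere_subspace_general {ι R : Type*} [Fintype ι] [DecidableEq ι]
    [CommRing R] (hR : (2 : R) ∈ nonZeroDivisors R) (P : Matrix ι ι R) (hP : IsUnit P) :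
    ∃ Q : Submodule R (Matrix ι ι R),
      (Q : Set (Matrix ι ι R)) = {A | A.IsSymm ∧ P * A + A * P = 0} ∧
      ∀ A ∈ Q, ∀ k : ℕ, (A ^ (2 * k + 1)).trace = 0 := by
  refine ⟨symmetricAnticommutant P, Set.ext fun _ ↦ mem_symmetricAnticommutant, fun A hA k ↦ ?_⟩
  have anticommutes : P * A + A * P = 0 := (mem_symmetricAnticommutant.mp hA).2
  exact trace_pow_eq_zero_of_semiconjBy_neg hR hP
    (mul_add_mul_eq_zero_iff_semiconjBy_neg.mp anticommutes) (odd_two_mul_add_one k)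

theorem anticommutant_is_austere_subspace {n : ℕ} (P : Matrix (Fin n) (Fin n) ℝ)
    (hP : Pᵀ * P = 1) :
    ∃ Q : Submodule ℝ (Matrix (Fin n) (Fin n) ℝ),
      (Q : Set (Matrix (Fin n) (Fin n) ℝ))
          = {A | A.IsSymm ∧ P * A + A * P = 0} ∧
      ∀ A ∈ Q, ∀ k : ℕ, (A ^ (2 * k + 1)).trace = 0 :=
  anticommutant_is_austere_subspace_general (mem_nonZeroDivisors_of_ne_zero two_ne_zero) P
    (.of_mul_eq_one_right _ hP)
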